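/- arXiv:2107.05796 — 7 statements merged into one kernel-verified Lean document; each statement's English description precedes it below -/
import Mathlib

section
/- Let V : ℝ → ℝⁿ and W : ℝ → Matrix (Fin n) (Fin n) ℝ be differentiable on [0,T) and satisfy the co-evolution system V'(t) = W(t)·V(t) and W'(t) = V(t)V(t)ᵀ for all t ∈ [0,T). Then W satisfies the matrix Riccati-type equation W'(t) = W(t)·W(t)ᵀ + C for all t ∈ [0,T), where C := V(0)V(0)ᵀ − W(0)W(0)ᵀ is a constant symmetric n×n matrix. -/
/-!
The matrix `V Vᵀ - W Wᵀ` is conserved along the flow: by the product rule both terms have derivative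
`W V Vᵀ + V Vᵀ Wᵀ` (`coevolution_entry_hasDerivAt_zero`). Hence it keeps its initial value `C`, and
`W' = V Vᵀ = W Wᵀ + C`. Symmetry of `C` is immediate from its formula.
-/

open Matrix Set

/-- The function differentiated here is the `(i, j)` entry of `V Vᵀ - W Wᵀ`. -/
lemma coevolution_entry_hasDerivAt_zero {n : ℕ} {V : ℝ → Fin n → ℝ}
    {W : ℝ → Matrix (Fin n) (Fin n) ℝ} {t : ℝ}
    (hV : HasDerivAt V (W t *ᵥ V t) t)
    (hW : ∀ i j, HasDerivAt (fun s => W s i j) (vecMulVec (V t) (V t) i j) t)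
    (i j : Fin n) :
    HasDerivAt (fun s => V s i * V s j - ∑ k, W s i k * W s j k) 0 t := by
  have hV' := hasDerivAt_pi.1 hV
  have h := ((hV' i).mul (hV' j)).sub
    (HasDerivAt.fun_sum (u := Finset.univ) fun k _ => (hW i k).mul (hW j k))
  refine h.congr_deriv ?_
  simp only [mulVec, dotProduct, vecMulVec_apply, Finset.sum_mul, Finset.mul_sum,
    ← Finset.sum_add_distrib, ← Finset.sum_sub_distrib]
  exact Finset.sum_eq_zero fun k _ => by ring

/-- If `(V, W)` solves the co-evolution system `V' = W·V`, `W' = V·Vᵀ` on `[0,T)`, then `W`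
satisfies the matrix Riccati-type equation `W' = W·Wᵀ + C` where
`C = V(0)V(0)ᵀ − W(0)W(0)ᵀ` is constant and symmetric. -/
theorem coevolution_riccati_general
    (n : ℕ) (T : ℝ) (hT : 0 < T)
    (V : ℝ → Fin n → ℝ) (W : ℝ → Matrix (Fin n) (Fin n) ℝ)
    (hV : ∀ t ∈ Set.Ico (0 : ℝ) T, HasDerivAt V (W t *ᵥ V t) t)
    (hW : ∀ t ∈ Set.Ico (0 : ℝ) T, ∀ i j,
      HasDerivAt (fun s => W s i j) (vecMulVec (V t) (V t) i j) t)
    (C : Matrix (Fin n) (Fin n) ℝ)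
    (hC : C = vecMulVec (V 0) (V 0) - W 0 * (W 0)ᵀ) :
    Cᵀ = C ∧
    ∀ t ∈ Set.Ico (0 : ℝ) T, ∀ i j,
      HasDerivAt (fun s => W s i j) ((W t * (W t)ᵀ + C) i j) t := by
  refine ⟨by simp [hC, transpose_vecMulVec], fun t ht i j => ?_⟩
  have hd : ∀ s ∈ Set.Ico (0 : ℝ) T,
      HasDerivAt (fun s => V s i * V s j - ∑ k, W s i k * W s j k) 0 s := fun s hs =>
    coevolution_entry_hasDerivAt_zero (hV s hs) (hW s hs) i j
  have hconst := constant_of_has_deriv_right_zero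
    (fun s hs => (hd s ⟨hs.1, hs.2.trans_lt ht.2⟩).continuousAt.continuousWithinAt)
    (fun s hs => (hd s ⟨hs.1, hs.2.trans ht.2⟩).hasDerivWithinAt) t ⟨ht.1, le_rfl⟩
  refine (hW t ht i j).congr_deriv ?_
  simp only [hC, Matrix.add_apply, Matrix.sub_apply, mul_apply, transpose_apply, vecMulVec_apply]
  linarith
end

section
/- Let V : ℝ → ℝⁿ and W : ℝ → Matrix (Fin n) (Fin n) ℝ be differentiable on [0,T) and satisfy the co-evolution system V'(t) = W(t)·V(t) and W'(t) = V(t)V(t)ᵀ for all t ∈ [0,T), and suppose W(0) is symmetric. Then W satisfies the matrix Riccati equation W'(t) = W(t)² + C for all t ∈ [0,T), where C := V(0)V(0)ᵀ − W(0)² is a constant symmetric n×n matrix. -/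
/-!
The matrix `V Vᵀ - W²` is a first integral of the system. Since `V Vᵀ` is symmetric, `W - Wᵀ` has
zero derivative, so `W` stays symmetric on `[0, T)`. Then
`(V Vᵀ)' = W V Vᵀ + V (W V)ᵀ = W V Vᵀ + V Vᵀ W = W W' + W' W = (W²)'`,
hence `V Vᵀ - W²` keeps its initial value `C`, and `W' = V Vᵀ = W² + C`.
-/

open Matrix Set

lemma eq_initial_of_hasDerivAt_zero {T : ℝ} {f : ℝ → ℝ}
    (hf : ∀ t ∈ Set.Ico (0 : ℝ) T, HasDerivAt f 0 t) :
    ∀ t ∈ Set.Ico (0 : ℝ) T, f t = f 0 := by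
  intro t ht
  have hsub : ∀ x ∈ Set.Icc (0 : ℝ) t, x ∈ Set.Ico (0 : ℝ) T :=
    fun x hx => ⟨hx.1, hx.2.trans_lt ht.2⟩
  exact constant_of_has_deriv_right_zero
    (fun x hx => (hf x (hsub x hx)).continuousAt.continuousWithinAt)
    (fun x hx => (hf x (hsub x ⟨hx.1, hx.2.le⟩)).hasDerivWithinAt)
    t ⟨ht.1, le_rfl⟩

/-- If `(V, W)` solves the co-evolution system `V' = W·V`, `W' = V·Vᵀ` on `[0,T)` with `W(0)`
symmetric, then `W` satisfies the matrix Riccati equation `W' = W² + C` where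
`C = V(0)V(0)ᵀ − W(0)²` is constant and symmetric. -/
theorem coevolution_riccati_symmetric
    (n : ℕ) (T : ℝ) (hT : 0 < T)
    (V : ℝ → Fin n → ℝ) (W : ℝ → Matrix (Fin n) (Fin n) ℝ)
    (hV : ∀ t ∈ Set.Ico (0 : ℝ) T, HasDerivAt V (W t *ᵥ V t) t)
    (hW : ∀ t ∈ Set.Ico (0 : ℝ) T, ∀ i j,
      HasDerivAt (fun s => W s i j) (vecMulVec (V t) (V t) i j) t)
    (hsym : (W 0)ᵀ = W 0)
    (C : Matrix (Fin n) (Fin n) ℝ)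
    (hC : C = vecMulVec (V 0) (V 0) - W 0 ^ 2) :
    Cᵀ = C ∧
    ∀ t ∈ Set.Ico (0 : ℝ) T, ∀ i j,
      HasDerivAt (fun s => W s i j) ((W t ^ 2 + C) i j) t := by
  have hWsym : ∀ t ∈ Set.Ico (0 : ℝ) T, ∀ i j, W t i j = W t j i := by
    intro t ht i j
    have h := eq_initial_of_hasDerivAt_zero (f := fun s => W s i j - W s j i) (T := T)
      (fun s hs => by
        refine ((hW s hs i j).sub (hW s hs j i)).congr_deriv ?_
        simp only [vecMulVec_apply]
        ring) t ht
    have h0 : W 0 i j = W 0 j i := congrFun (congrFun hsym j) i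
    linarith
  have hconst : ∀ t ∈ Set.Ico (0 : ℝ) T, vecMulVec (V t) (V t) - W t ^ 2 = C := by
    intro t ht
    ext i j
    rw [hC]
    have h := eq_initial_of_hasDerivAt_zero
      (f := fun s => V s i * V s j - ∑ k, W s i k * W s k j) (T := T)
      (fun s hs => by
        have hVc := hasDerivAt_pi.1 (hV s hs)
        refine (((hVc i).mul (hVc j)).sub
          (HasDerivAt.fun_sum fun k _ => (hW s hs i k).mul (hW s hs k j))).congr_deriv ?_
        simp only [vecMulVec_apply, mulVec, dotProduct, Finset.sum_add_distrib]
        simp only [Finset.sum_mul, Finset.mul_sum]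
        rw [← Finset.sum_add_distrib, ← Finset.sum_add_distrib, ← Finset.sum_sub_distrib]
        refine Finset.sum_eq_zero fun k _ => ?_
        -- `(W V)ⱼ` involves row `j` of `W`, while `(W²)ᵢⱼ` involves column `j`.
        rw [hWsym s hs j k]
        ring) t ht
    simpa only [Matrix.sub_apply, vecMulVec_apply, pow_two, mul_apply] using h
  refine ⟨?_, fun t ht i j => ?_⟩
  · rw [hC, transpose_sub, transpose_pow, hsym, transpose_vecMulVec]
  · rw [← hconst t ht, add_sub_cancel]
    exact hW t ht i j
end

section
/- Let V : ℝ → ℝⁿ and W : ℝ → Matrix (Fin n) (Fin n) ℝ be differentiable on [0,T) and satisfy the co-evolution system V'(t) = W(t)·V(t) and W'(t) = V(t)V(t)ᵀ for all t ∈ [0,T), with W(0) symmetric. Then the length function φ(t) := ‖V(t)‖² is twice differentiable and satisfies φ''(t) = 4‖W(t)·V(t)‖² + 2‖V(t)‖⁴ for all t ∈ [0,T); in particular φ''(t) > 0 at every t with V(t) ≠ 0, so φ is strictly convex unless V is identically zero. -/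
/-!
Since `V Vᵀ` is symmetric, `W - Wᵀ` has zero derivative, so `W` stays symmetric on `[0,T)`.
The first derivative of `‖V‖²` is `2 ⟨V, W V⟩`; differentiating again gives
`2 ‖W V‖² + 2 ⟨V, V Vᵀ V⟩ + 2 ⟨V, W W V⟩`. The middle term is `2 ‖V‖⁴`, and symmetry of `W`
turns the last one into `2 ‖W V‖²`.
-/

open Matrix Set

theorem coevolution_symm {n : ℕ} {T : ℝ} {V : ℝ → Fin n → ℝ}
    {W : ℝ → Matrix (Fin n) (Fin n) ℝ}
    (hW : ∀ t ∈ Set.Ico (0 : ℝ) T, ∀ i j,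
      HasDerivAt (fun s => W s i j) (vecMulVec (V t) (V t) i j) t)
    (hsym : (W 0)ᵀ = W 0) {t : ℝ} (ht : t ∈ Set.Ico (0 : ℝ) T) : (W t)ᵀ = W t := by
  ext i j
  have hd : ∀ x ∈ Set.Ico (0 : ℝ) T, HasDerivAt (fun s => W s j i - W s i j) 0 x := by
    intro x hx
    refine ((hW x hx j i).fun_sub (hW x hx i j)).congr_deriv ?_
    rw [vecMulVec_apply, vecMulVec_apply]
    ring
  have hc := constant_of_has_deriv_right_zero (f := fun s => W s j i - W s i j) (a := 0) (b := t)
    (fun x hx => (hd x ⟨hx.1, hx.2.trans_lt ht.2⟩).continuousAt.continuousWithinAt)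
    (fun x hx => (hd x ⟨hx.1, hx.2.trans ht.2⟩).hasDerivWithinAt) t ⟨ht.1, le_rfl⟩
  have h0 : W 0 j i = W 0 i j := congrFun (congrFun hsym i) j
  simp only [h0, sub_self] at hc
  exact sub_eq_zero.mp hc

/-- The second derivative as the product rule produces it, rewritten using the symmetry of `A`. -/
theorem second_deriv_identity {n : ℕ} {A : Matrix (Fin n) (Fin n) ℝ} (hA : Aᵀ = A)
    (v : Fin n → ℝ) :
    ∑ i, 2 * ((A *ᵥ v) i * (A *ᵥ v) i +
      v i * ∑ j, (vecMulVec v v i j * v j + A i j * (A *ᵥ v) j)) =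
    4 * (∑ i, (A *ᵥ v) i ^ 2) + 2 * (∑ i, v i ^ 2) ^ 2 := by
  have h1 : ∑ i, v i * (∑ j, A i j * (A *ᵥ v) j) = ∑ i, (A *ᵥ v) i ^ 2 := by
    change v ⬝ᵥ (A *ᵥ (A *ᵥ v)) = _
    rw [dotProduct_mulVec, ← mulVec_transpose, hA]
    simp [dotProduct, sq]
  have h2 : ∑ i, v i * (∑ j, vecMulVec v v i j * v j) = (∑ i, v i ^ 2) ^ 2 := by
    rw [sq (∑ i, v i ^ 2), Finset.sum_mul]
    refine Finset.sum_congr rfl fun i _ => ?_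
    rw [Finset.mul_sum, Finset.mul_sum]
    refine Finset.sum_congr rfl fun j _ => ?_
    rw [vecMulVec_apply]
    ring
  rw [← Finset.mul_sum, Finset.sum_add_distrib]
  simp only [Finset.sum_add_distrib, mul_add]
  rw [h1, h2]
  simp only [← sq]
  ring

/-- For the co-evolution system `V' = W·V`, `W' = V·Vᵀ` on `[0,T)` with `W(0)` symmetric, the
length function `φ(t) = ‖V(t)‖² = ∑ i, V(t)ᵢ²` is twice differentiable with
`φ'' = 4‖W·V‖² + 2‖V‖⁴`; in particular `φ''(t) > 0` whenever `V(t) ≠ 0`. -/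
theorem coevolution_length_strictly_convex
    (n : ℕ) (T : ℝ) (hT : 0 < T)
    (V : ℝ → Fin n → ℝ) (W : ℝ → Matrix (Fin n) (Fin n) ℝ)
    (hV : ∀ t ∈ Set.Ico (0 : ℝ) T, HasDerivAt V (W t *ᵥ V t) t)
    (hW : ∀ t ∈ Set.Ico (0 : ℝ) T, ∀ i j,
      HasDerivAt (fun s => W s i j) (vecMulVec (V t) (V t) i j) t)
    (hsym : (W 0)ᵀ = W 0) :
    ∃ φ' : ℝ → ℝ,
      (∀ t ∈ Set.Ico (0 : ℝ) T, HasDerivAt (fun s => ∑ i, V s i ^ 2) (φ' t) t) ∧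
      (∀ t ∈ Set.Ico (0 : ℝ) T,
        HasDerivAt φ'
          (4 * (∑ i, (W t *ᵥ V t) i ^ 2) + 2 * (∑ i, V t i ^ 2) ^ 2) t) ∧
      (∀ t ∈ Set.Ico (0 : ℝ) T, V t ≠ 0 →
        0 < 4 * (∑ i, (W t *ᵥ V t) i ^ 2) + 2 * (∑ i, V t i ^ 2) ^ 2) := by
  have hVi : ∀ t ∈ Set.Ico (0 : ℝ) T, ∀ i, HasDerivAt (fun s => V s i) ((W t *ᵥ V t) i) t :=
    fun t ht => hasDerivAt_pi.mp (hV t ht)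
  refine ⟨fun t => ∑ i, 2 * (V t i * (W t *ᵥ V t) i), fun t ht => ?_, fun t ht => ?_,
    fun t _ hne => ?_⟩
  · refine HasDerivAt.fun_sum fun i _ => ?_
    refine ((hVi t ht i).fun_pow 2).congr_deriv ?_
    push_cast
    ring
  · rw [← second_deriv_identity (coevolution_symm hW hsym ht) (V t)]
    have hWV : ∀ i, HasDerivAt (fun s => (W s *ᵥ V s) i)
        (∑ j, (vecMulVec (V t) (V t) i j * V t j + W t i j * (W t *ᵥ V t) j)) t := by
      intro i
      simp only [mulVec, dotProduct]
      exact HasDerivAt.fun_sum fun j _ => (hW t ht i j).fun_mul (hVi t ht j)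
    exact HasDerivAt.fun_sum fun i _ => ((hVi t ht i).fun_mul (hWV i)).const_mul 2
  · obtain ⟨i, hi⟩ := Function.ne_iff.mp hne
    have hpos : 0 < ∑ i, V t i ^ 2 :=
      Finset.sum_pos' (fun i _ => sq_nonneg _) ⟨i, Finset.mem_univ i, sq_pos_of_ne_zero hi⟩
    have hnn : 0 ≤ ∑ i, (W t *ᵥ V t) i ^ 2 := Finset.sum_nonneg fun i _ => sq_nonneg _
    positivity
end

section
/- Let W : [0,T) → Matrix (Fin n) (Fin n) ℝ be a continuous family of symmetric matrices of the form W(t) = U·diag(β₁(t), …, βₙ(t))·Uᵀ, where U = [u_{ij}] is a constant orthogonal matrix (so the eigenvectors of W(t) are time independent), β₁(t) > βᵢ(t) for all i ≥ 2 and all t (unique largest eigenvalue), β₁(t) → +∞ as t → T, the remaining eigenvalues β₂(t), …, βₙ(t) are bounded on [0,T), and all components u_{i1} of the β₁-eigenvector (the first column of U) are nonzero. Then there exists t₀ < T such that for all t ∈ (t₀, T) and all pairwise distinct indices i, j, k, the product w_{ij}(t)·w_{jk}(t)·w_{ki}(t) > 0, i.e., structural balance holds. -/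
open Matrix Set Filter

/-!
Write `u` for the first column of `U`. Each entry of `W t` is
`w_{ij} = β₀ u_i u_j + ∑_{l ≠ 0} β_l U_{il} U_{jl}`, and the last sum is bounded on `[0,T)`. Hence
`w_{ij} u_i u_j ≥ β₀ (u_i u_j)² - C → +∞`, so near `T` every `w_{ij}` has the sign of `u_i u_j`.
Around a triangle each `u_i` occurs twice, so the product of the three signs is positive.
-/

/-- Suppose `W(t) = U·diag(β(t))·Uᵀ` on `[0,T)` with `U` a constant orthogonal matrix,
`β₀(t)` the unique largest eigenvalue tending to `+∞` as `t → T`, the other eigenvalues bounded,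
and all components of the first column of `U` nonzero. Then structural balance
`w_{ij}w_{jk}w_{ki} > 0` holds for all pairwise distinct `i, j, k` for all `t` close to `T`. -/
theorem structural_balance_from_blowup
    (n : ℕ) (hn : 0 < n) (T : ℝ) (hT : 0 < T)
    (W : ℝ → Matrix (Fin n) (Fin n) ℝ)
    (U : Matrix (Fin n) (Fin n) ℝ) (hU : Uᵀ * U = 1)
    (β : ℝ → Fin n → ℝ)
    (hWdef : ∀ t ∈ Set.Ico (0 : ℝ) T, W t = U * Matrix.diagonal (β t) * Uᵀ)
    (hWcont : ContinuousOn W (Set.Ico (0 : ℝ) T))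
    (hlargest : ∀ t ∈ Set.Ico (0 : ℝ) T, ∀ i : Fin n, i ≠ ⟨0, hn⟩ →
      β t i < β t ⟨0, hn⟩)
    (hblow : Tendsto (fun t => β t ⟨0, hn⟩) (nhdsWithin T (Set.Iio T)) atTop)
    (hbounded : ∃ Mb : ℝ, ∀ t ∈ Set.Ico (0 : ℝ) T, ∀ i : Fin n, i ≠ ⟨0, hn⟩ →
      |β t i| ≤ Mb)
    (hnz : ∀ i : Fin n, U i ⟨0, hn⟩ ≠ 0) :
    ∃ t₀ ∈ Set.Ico (0 : ℝ) T, ∀ t ∈ Set.Ioo t₀ T,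
      ∀ i j k : Fin n, i ≠ j → j ≠ k → i ≠ k →
        0 < W t i j * W t j k * W t k i := by
  obtain ⟨Mb, hMb⟩ := hbounded
  set o : Fin n := ⟨0, hn⟩
  have hIco : ∀ᶠ t in nhdsWithin T (Set.Iio T), t ∈ Set.Ico (0 : ℝ) T :=
    Ico_mem_nhdsLT hT
  have key : ∀ i j : Fin n, ∀ᶠ t in nhdsWithin T (Set.Iio T),
      0 < W t i j * (U i o * U j o) := by
    intro i j
    have hpos : 0 < (U i o * U j o) ^ 2 := by
      have := mul_ne_zero (hnz i) (hnz j)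
      positivity
    set C : ℝ := ∑ l ∈ Finset.univ.erase o, |U i l * U j l * (U i o * U j o)| * Mb
    filter_upwards [hIco, (hblow.const_mul_atTop hpos).eventually_gt_atTop C] with t ht hC
    have hW : W t i j * (U i o * U j o) = (U i o * U j o) ^ 2 * β t o +
        ∑ l ∈ Finset.univ.erase o, U i l * U j l * (U i o * U j o) * β t l := by
      have h : W t i j = ∑ l, U i l * β t l * U j l := by
        rw [hWdef t ht, Matrix.mul_apply]
        simp [Matrix.mul_diagonal]
      rw [h, ← Finset.add_sum_erase _ _ (Finset.mem_univ o), add_mul, Finset.sum_mul]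
      congr 1
      · ring
      · exact Finset.sum_congr rfl fun l _ => by ring
    have hS : |∑ l ∈ Finset.univ.erase o, U i l * U j l * (U i o * U j o) * β t l| ≤ C := by
      refine (Finset.abs_sum_le_sum_abs _ _).trans (Finset.sum_le_sum fun l hl => ?_)
      rw [abs_mul]
      exact mul_le_mul_of_nonneg_left (hMb t ht l (Finset.ne_of_mem_erase hl)) (abs_nonneg _)
    rw [hW]
    linarith [(abs_le.1 hS).1]
  have hall : ∀ᶠ t in nhdsWithin T (Set.Iio T), ∀ i j : Fin n,
      0 < W t i j * (U i o * U j o) :=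
    eventually_all.2 fun i => eventually_all.2 fun j => key i j
  obtain ⟨t₀, ht₀, hsub⟩ := (mem_nhdsLT_iff_exists_mem_Ico_Ioo_subset hT).1 hall
  refine ⟨t₀, ht₀, fun t ht i j k _ _ _ => ?_⟩
  have h : ∀ i j : Fin n, 0 < W t i j * (U i o * U j o) := hsub ht
  have hprod := mul_pos (mul_pos (h i j) (h j k)) (h k i)
  have heq : W t i j * (U i o * U j o) * (W t j k * (U j o * U k o)) *
      (W t k i * (U k o * U i o)) =
      W t i j * W t j k * W t k i * (U i o * U j o * U k o) ^ 2 := by ring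
  rw [heq] at hprod
  exact pos_of_mul_pos_left hprod (sq_nonneg _)
end

section
/- Let W : [0,T) → Matrix (Fin n) (Fin n) ℝ be a continuous family of symmetric matrices of the form W(t) = U·diag(β₁(t), …, βₙ(t))·Uᵀ, where U = [u_{ij}] is a constant orthogonal matrix, β₁(t) → +∞ as t → T, the remaining eigenvalues β₂(t), …, βₙ(t) are bounded on [0,T), and all components u_{i1} of the first column of U are nonzero. Then there exists t₀ < T such that for all t ∈ (t₀, T) and all i ≠ j: w_{ij}(t) > 0 if u_{i1}·u_{j1} > 0, and w_{ij}(t) < 0 if u_{i1}·u_{j1} < 0. In particular the index set splits into two camps U⁺ = {i : u_{i1} > 0} and U⁻ = {i : u_{i1} < 0} with positive ties within each camp and negative ties across the camps. -/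
open Matrix Set Filter

/-!
Expanding `U·diag(β)·Uᵀ` entrywise and isolating the first eigenvalue gives
`w_{ij} = u_{i0} u_{j0} β₀ + ∑_{k ≠ 0} u_{ik} β_k u_{jk}`. The remaining sum is bounded by a constant
(`abs_rest_le`), whereas `|u_{i0} u_{j0}| β₀ → +∞` because no `u_{i0}` vanishes. There are finitely
many pairs `(i, j)`, so on a single left neighbourhood of `T` the first term dominates in every
entry and dictates its sign.
-/

/-- The contribution of the bounded eigenvalues to an entry of `U·diag(b)·Uᵀ` is bounded uniformly
in `b`. -/
lemma abs_rest_le {ι : Type*} [Fintype ι] [DecidableEq ι] (U : Matrix ι ι ℝ) (b : ι → ℝ)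
    (z : ι) (M : ℝ) (hb : ∀ k, k ≠ z → |b k| ≤ M) (i j : ι) :
    |(U * Matrix.diagonal b * Uᵀ) i j - U i z * U j z * b z| ≤
      ∑ k ∈ Finset.univ.erase z, |U i k * U j k| * M := by
  have h : (U * Matrix.diagonal b * Uᵀ) i j - U i z * U j z * b z =
      ∑ k ∈ Finset.univ.erase z, U i k * U j k * b k := by
    rw [Matrix.mul_apply, ← Finset.add_sum_erase _ _ (Finset.mem_univ z)]
    simp only [Matrix.mul_diagonal, Matrix.transpose_apply, mul_right_comm _ (b _)]
    ring
  rw [h]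
  refine (Finset.abs_sum_le_sum_abs _ _).trans (Finset.sum_le_sum fun k hk => ?_)
  rw [abs_mul]
  exact mul_le_mul_of_nonneg_left (hb k (Finset.ne_of_mem_erase hk)) (abs_nonneg _)

/-- Suppose `W(t) = U·diag(β(t))·Uᵀ` on `[0,T)` with `U` a constant orthogonal matrix,
`β₀(t) → +∞` as `t → T`, the other eigenvalues bounded, and all components of the first column
of `U` nonzero. Then near `T` the sign of `w_{ij}(t)` (for `i ≠ j`) agrees with the sign of
`u_{i0}·u_{j0}`: the indices split into two camps with positive ties inside each camp and
negative ties across. -/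
theorem two_camps_from_blowup
    (n : ℕ) (hn : 0 < n) (T : ℝ) (hT : 0 < T)
    (W : ℝ → Matrix (Fin n) (Fin n) ℝ)
    (U : Matrix (Fin n) (Fin n) ℝ) (hU : Uᵀ * U = 1)
    (β : ℝ → Fin n → ℝ)
    (hWdef : ∀ t ∈ Set.Ico (0 : ℝ) T, W t = U * Matrix.diagonal (β t) * Uᵀ)
    (hWcont : ContinuousOn W (Set.Ico (0 : ℝ) T))
    (hblow : Tendsto (fun t => β t ⟨0, hn⟩) (nhdsWithin T (Set.Iio T)) atTop)
    (hbounded : ∃ Mb : ℝ, ∀ t ∈ Set.Ico (0 : ℝ) T, ∀ i : Fin n, i ≠ ⟨0, hn⟩ →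
      |β t i| ≤ Mb)
    (hnz : ∀ i : Fin n, U i ⟨0, hn⟩ ≠ 0) :
    ∃ t₀ ∈ Set.Ico (0 : ℝ) T, ∀ t ∈ Set.Ioo t₀ T, ∀ i j : Fin n, i ≠ j →
      (0 < U i ⟨0, hn⟩ * U j ⟨0, hn⟩ → 0 < W t i j) ∧
      (U i ⟨0, hn⟩ * U j ⟨0, hn⟩ < 0 → W t i j < 0) := by
  obtain ⟨M, hM⟩ := hbounded
  have hdom : ∀ᶠ t in nhdsWithin T (Set.Iio T), ∀ i j : Fin n,
      ∑ k ∈ Finset.univ.erase (⟨0, hn⟩ : Fin n), |U i k * U j k| * M <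
        |U i ⟨0, hn⟩ * U j ⟨0, hn⟩| * β t ⟨0, hn⟩ :=
    eventually_all.2 fun i => eventually_all.2 fun j =>
      (hblow.const_mul_atTop (abs_pos.2 (mul_ne_zero (hnz i) (hnz j)))).eventually_gt_atTop _
  obtain ⟨l, hl, hlT⟩ := (mem_nhdsLT_iff_exists_Ioo_subset' hT).1 hdom
  refine ⟨max l 0, ⟨le_max_right _ _, max_lt hl hT⟩, fun t ht i j _ => ?_⟩
  have htI : t ∈ Set.Ico (0 : ℝ) T := ⟨(le_max_right l 0).trans ht.1.le, ht.2⟩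
  have hd : ∑ k ∈ Finset.univ.erase (⟨0, hn⟩ : Fin n), |U i k * U j k| * M <
      |U i ⟨0, hn⟩ * U j ⟨0, hn⟩| * β t ⟨0, hn⟩ :=
    hlT ⟨(le_max_left l 0).trans_lt ht.1, ht.2⟩ i j
  have hr := abs_le.1 (abs_rest_le U (β t) ⟨0, hn⟩ M (hM t htI) i j)
  rw [hWdef t htI]
  constructor
  · intro h
    rw [abs_of_pos h] at hd
    linarith [hr.1]
  · intro h
    rw [abs_of_neg h] at hd
    linarith [hr.2]
end

section
/- Let B and C be real n×n matrices. Define the matrix power series Y(t) = Σ_{m=0}^∞ (−1)^m t^{2m} C^m/(2m)! + Σ_{m=0}^∞ (−1)^{m+1} t^{2m+1} C^m B/(2m+1)! and Z(t) = Σ_{m=0}^∞ (−1)^{m+1} t^{2m} C^m B/(2m)! + Σ_{m=0}^∞ (−1)^{m+1} t^{2m+1} C^{m+1}/(2m+1)! (both series converge for all t ∈ ℝ). Then Y(0) = I, Z(0) = −B, and on any interval J containing 0 on which Y(t) is invertible, the matrix function W(t) := −Z(t)·Y(t)⁻¹ is differentiable and satisfies the matrix Riccati initial value problem W'(t) = W(t)²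 + C for all t ∈ J and W(0) = B. -/
/-!
Set `A 0 = 1`, `A 1 = -B`, `A (k + 2) = -C * A k`. The even and odd parts of
`∑ tᵏ/k! • A k` are the two series defining `Y`, and those of the series with shifted coefficients
`A (k + 1)` are the two series defining `Z`. The `A k` grow at most geometrically, so these
series converge everywhere and differentiate term by term (`hasDerivAt_expSeries`), differentiation
being the shift of coefficients. Hence `Y' = Z` and `Z' = -C * Y`, and where `Y` is invertible,
`(-Z * Y⁻¹)' = C * Y * Y⁻¹ + Z * Y⁻¹ * Z * Y⁻¹ = C + W ^ 2`.
-/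

open Matrix Set

/-- The matrix power series `Y(t)` for the solution of the matrix Riccati equation
`W' = W² + C`, `W(0) = B`. -/
noncomputable def riccatiY {n : ℕ} (B C : Matrix (Fin n) (Fin n) ℝ) (t : ℝ) :
    Matrix (Fin n) (Fin n) ℝ :=
  (∑' m : ℕ, ((-1 : ℝ) ^ m * t ^ (2 * m) / (2 * m).factorial) • C ^ m) +
  (∑' m : ℕ, ((-1 : ℝ) ^ (m + 1) * t ^ (2 * m + 1) / (2 * m + 1).factorial) • (C ^ m * B))

/-- The matrix power series `Z(t)` for the solution of the matrix Riccati equation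
`W' = W² + C`, `W(0) = B`. -/
noncomputable def riccatiZ {n : ℕ} (B C : Matrix (Fin n) (Fin n) ℝ) (t : ℝ) :
    Matrix (Fin n) (Fin n) ℝ :=
  (∑' m : ℕ, ((-1 : ℝ) ^ (m + 1) * t ^ (2 * m) / (2 * m).factorial) • (C ^ m * B)) +
  (∑' m : ℕ, ((-1 : ℝ) ^ (m + 1) * t ^ (2 * m + 1) / (2 * m + 1).factorial) • C ^ (m + 1))

section ExpSeries

variable {E : Type*} [NormedAddCommGroup E] [NormedSpace ℝ E]

theorem norm_expSeries_term_le {A : ℕ → E} {K r : ℝ} (hA : ∀ k, ‖A k‖ ≤ K * r ^ k)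
    {t R : ℝ} (ht : |t| ≤ R) (k : ℕ) :
    ‖(t ^ k / k.factorial) • A k‖ ≤ K * ((R * r) ^ k / k.factorial) := by
  have hR : 0 ≤ R := (abs_nonneg t).trans ht
  have h1 : ‖t ^ k / (k.factorial : ℝ)‖ ≤ R ^ k / k.factorial := by
    rw [Real.norm_eq_abs, abs_div, abs_pow, Nat.abs_cast]
    gcongr
  calc ‖(t ^ k / k.factorial) • A k‖ ≤ (R ^ k / k.factorial) * (K * r ^ k) := by
        rw [norm_smul]
        exact mul_le_mul h1 (hA k) (norm_nonneg _) (by positivity)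
    _ = K * ((R * r) ^ k / k.factorial) := by rw [mul_pow]; ring

theorem summable_expSeries [CompleteSpace E] {A : ℕ → E} {K r : ℝ}
    (hA : ∀ k, ‖A k‖ ≤ K * r ^ k) (t : ℝ) :
    Summable (fun k : ℕ => (t ^ k / k.factorial) • A k) :=
  Summable.of_norm_bounded ((Real.summable_pow_div_factorial _).mul_left K)
    (norm_expSeries_term_le hA le_rfl)

/-- An exponential power series with geometrically bounded coefficients is differentiated by
shifting its coefficients. -/
theorem hasDerivAt_expSeries [CompleteSpace E] {A : ℕ → E} {K r : ℝ}
    (hA : ∀ k, ‖A k‖ ≤ K * r ^ k) (t : ℝ) :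
    HasDerivAt (fun s : ℝ => ∑' k : ℕ, (s ^ k / k.factorial) • A k)
      (∑' k : ℕ, (t ^ k / k.factorial) • A (k + 1)) t := by
  have hA' : ∀ k, ‖A (k + 1)‖ ≤ (K * r) * r ^ k := fun k =>
    (hA (k + 1)).trans_eq (by ring)
  have htR : t ∈ Metric.ball (0 : ℝ) (|t| + 1) := by simp
  have hterm : ∀ (k : ℕ) (s : ℝ),
      HasDerivAt (fun s : ℝ => (s ^ (k + 1) / (k + 1).factorial) • A (k + 1))
        ((s ^ k / k.factorial) • A (k + 1)) s := by
    intro k s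
    have hc : ((k + 1 : ℕ) : ℝ) * s ^ (k + 1 - 1) / ((k + 1).factorial : ℝ)
        = s ^ k / k.factorial := by
      rw [Nat.factorial_succ, Nat.add_sub_cancel]
      push_cast
      field_simp
    have h := ((hasDerivAt_pow (k + 1) s).div_const ((k + 1).factorial : ℝ)).smul_const
      (A (k + 1))
    rwa [hc] at h
  -- The constant term is split off so that the remaining terms have derivatives of the same shape.
  have hsplit : (fun s : ℝ => ∑' k : ℕ, (s ^ k / k.factorial) • A k) = fun s : ℝ =>
      (s ^ 0 / Nat.factorial 0) • A 0 +
        ∑' k : ℕ, (s ^ (k + 1) / (k + 1).factorial) • A (k + 1) :=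
    funext fun s => (summable_expSeries hA s).tsum_eq_zero_add
  simp only [pow_zero] at hsplit
  rw [hsplit]
  refine HasDerivAt.const_add _ ?_
  exact hasDerivAt_tsum_of_isPreconnected
    ((Real.summable_pow_div_factorial ((|t| + 1) * r)).mul_left (K * r))
    Metric.isOpen_ball (convex_ball (0 : ℝ) (|t| + 1)).isPreconnected
    (fun k s _ => hterm k s)
    (fun k s hs => norm_expSeries_term_le (A := fun k => A (k + 1)) hA'
      (by simpa using (mem_ball_zero_iff.1 hs).le) k)
    htR ((summable_nat_add_iff 1).2 (summable_expSeries hA t)) htR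

end ExpSeries

section Coefficients

variable {n : ℕ}

/-- The Taylor coefficients of `Y` at `0`, that is `Y(t) = ∑ tᵏ/k! • riccatiCoeff B C k`. -/
def riccatiCoeff (B C : Matrix (Fin n) (Fin n) ℝ) : ℕ → Matrix (Fin n) (Fin n) ℝ
  | 0 => 1
  | 1 => -B
  | k + 2 => -C * riccatiCoeff B C k

theorem riccatiCoeff_even (B C : Matrix (Fin n) (Fin n) ℝ) (m : ℕ) :
    riccatiCoeff B C (2 * m) = (-1 : ℝ) ^ m • C ^ m := by
  induction m with
  | zero => simp [riccatiCoeff]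
  | succ m ih =>
    rw [show 2 * (m + 1) = 2 * m + 2 by ring, riccatiCoeff, ih, pow_succ, pow_succ' C]
    simp

theorem riccatiCoeff_odd (B C : Matrix (Fin n) (Fin n) ℝ) (m : ℕ) :
    riccatiCoeff B C (2 * m + 1) = (-1 : ℝ) ^ (m + 1) • (C ^ m * B) := by
  induction m with
  | zero => simp [riccatiCoeff]
  | succ m ih =>
    rw [show 2 * (m + 1) + 1 = (2 * m + 1) + 2 by ring, riccatiCoeff, ih, pow_succ _ (m + 1),
      pow_succ' C, Matrix.mul_assoc]
    simp

end Coefficients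

section Riccati

-- The topology of the operator norm is definitionally the entrywise one, in which the series are
-- summed.
open scoped Matrix.Norms.Operator

variable {n : ℕ} (B C : Matrix (Fin n) (Fin n) ℝ)

theorem exists_norm_riccatiCoeff_le :
    ∃ K r : ℝ, ∀ k, ‖riccatiCoeff B C k‖ ≤ K * r ^ k := by
  refine ⟨‖(1 : Matrix (Fin n) (Fin n) ℝ)‖ + ‖B‖, 1 + ‖C‖, fun k => ?_⟩
  induction k using Nat.twoStepInduction with
  | zero => simp [riccatiCoeff]
  | one =>
    rw [riccatiCoeff, norm_neg, pow_one]
    nlinarith [norm_nonneg (1 : Matrix (Fin n) (Fin n) ℝ), norm_nonneg B, norm_nonneg C,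
      mul_nonneg (norm_nonneg B) (norm_nonneg C),
      mul_nonneg (norm_nonneg (1 : Matrix (Fin n) (Fin n) ℝ)) (norm_nonneg C)]
  | more k ih _ =>
    set K := ‖(1 : Matrix (Fin n) (Fin n) ℝ)‖ + ‖B‖
    have hC := norm_nonneg C
    calc ‖riccatiCoeff B C (k + 2)‖ ≤ ‖C‖ * (K * (1 + ‖C‖) ^ k) := by
          rw [riccatiCoeff]
          refine (norm_mul_le _ _).trans ?_
          rw [norm_neg]
          gcongr
      _ ≤ (1 + ‖C‖) ^ 2 * (K * (1 + ‖C‖) ^ k) := by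
          gcongr
          nlinarith
      _ = K * (1 + ‖C‖) ^ (k + 2) := by ring

theorem summable_riccatiCoeff (t : ℝ) :
    Summable (fun k : ℕ => (t ^ k / k.factorial) • riccatiCoeff B C k) := by
  obtain ⟨K, r, h⟩ := exists_norm_riccatiCoeff_le B C
  exact summable_expSeries h t

theorem summable_riccatiCoeff_succ (t : ℝ) :
    Summable (fun k : ℕ => (t ^ k / k.factorial) • riccatiCoeff B C (k + 1)) := by
  obtain ⟨K, r, h⟩ := exists_norm_riccatiCoeff_le B C
  exact summable_expSeries (K := K * r) (r := r) (fun k => (h (k + 1)).trans_eq (by ring)) t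

theorem riccatiY_term_even (t : ℝ) (m : ℕ) :
    (t ^ (2 * m) / (2 * m).factorial) • riccatiCoeff B C (2 * m) =
      ((-1 : ℝ) ^ m * t ^ (2 * m) / (2 * m).factorial) • C ^ m := by
  rw [riccatiCoeff_even, smul_smul]; congr 1; ring

theorem riccatiY_term_odd (t : ℝ) (m : ℕ) :
    (t ^ (2 * m + 1) / (2 * m + 1).factorial) • riccatiCoeff B C (2 * m + 1) =
      ((-1 : ℝ) ^ (m + 1) * t ^ (2 * m + 1) / (2 * m + 1).factorial) • (C ^ m * B) := by
  rw [riccatiCoeff_odd, smul_smul]; congr 1; ring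

theorem riccatiZ_term_even (t : ℝ) (m : ℕ) :
    (t ^ (2 * m) / (2 * m).factorial) • riccatiCoeff B C (2 * m + 1) =
      ((-1 : ℝ) ^ (m + 1) * t ^ (2 * m) / (2 * m).factorial) • (C ^ m * B) := by
  rw [riccatiCoeff_odd, smul_smul]; congr 1; ring

theorem riccatiZ_term_odd (t : ℝ) (m : ℕ) :
    (t ^ (2 * m + 1) / (2 * m + 1).factorial) • riccatiCoeff B C (2 * m + 1 + 1) =
      ((-1 : ℝ) ^ (m + 1) * t ^ (2 * m + 1) / (2 * m + 1).factorial) • C ^ (m + 1) := by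
  rw [show 2 * m + 1 + 1 = 2 * (m + 1) by ring, riccatiCoeff_even, smul_smul]; congr 1; ring

theorem summable_even {f : ℕ → Matrix (Fin n) (Fin n) ℝ} (hf : Summable f) :
    Summable (fun m => f (2 * m)) :=
  hf.comp_injective (i := fun m : ℕ => 2 * m) fun a b h => by simpa using h

theorem summable_odd {f : ℕ → Matrix (Fin n) (Fin n) ℝ} (hf : Summable f) :
    Summable (fun m => f (2 * m + 1)) :=
  hf.comp_injective (i := fun m : ℕ => 2 * m + 1) fun a b h => by simpa using h

theorem summable_riccati_series (t : ℝ) :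
    Summable (fun m : ℕ => ((-1 : ℝ) ^ m * t ^ (2 * m) / (2 * m).factorial) • C ^ m) ∧
    Summable (fun m : ℕ =>
      ((-1 : ℝ) ^ (m + 1) * t ^ (2 * m + 1) / (2 * m + 1).factorial) • (C ^ m * B)) ∧
    Summable (fun m : ℕ =>
      ((-1 : ℝ) ^ (m + 1) * t ^ (2 * m) / (2 * m).factorial) • (C ^ m * B)) ∧
    Summable (fun m : ℕ =>
      ((-1 : ℝ) ^ (m + 1) * t ^ (2 * m + 1) / (2 * m + 1).factorial) • C ^ (m + 1)) :=
  ⟨(summable_even (summable_riccatiCoeff B C t)).congr fun m => riccatiY_term_even B C t m,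
    (summable_odd (summable_riccatiCoeff B C t)).congr fun m => riccatiY_term_odd B C t m,
    (summable_even (summable_riccatiCoeff_succ B C t)).congr fun m => riccatiZ_term_even B C t m,
    (summable_odd (summable_riccatiCoeff_succ B C t)).congr fun m => riccatiZ_term_odd B C t m⟩

theorem riccatiY_eq (t : ℝ) :
    riccatiY B C t = ∑' k : ℕ, (t ^ k / k.factorial) • riccatiCoeff B C k := by
  have h := summable_riccatiCoeff B C t
  rw [← tsum_even_add_odd (summable_even h) (summable_odd h)]
  simp only [riccatiY_term_even, riccatiY_term_odd, riccatiY]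

theorem riccatiZ_eq (t : ℝ) :
    riccatiZ B C t = ∑' k : ℕ, (t ^ k / k.factorial) • riccatiCoeff B C (k + 1) := by
  have h := summable_riccatiCoeff_succ B C t
  rw [← tsum_even_add_odd (summable_even h) (summable_odd h)]
  simp only [riccatiZ_term_even, riccatiZ_term_odd, riccatiZ]

theorem tsum_expSeries_zero (A : ℕ → Matrix (Fin n) (Fin n) ℝ) :
    ∑' k : ℕ, ((0 : ℝ) ^ k / k.factorial) • A k = A 0 := by
  rw [tsum_eq_single 0 fun k hk => by simp [hk]]
  simp

theorem riccatiY_zero : riccatiY B C 0 = 1 := by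
  rw [riccatiY_eq, tsum_expSeries_zero, riccatiCoeff]

theorem riccatiZ_zero : riccatiZ B C 0 = -B := by
  rw [riccatiZ_eq, tsum_expSeries_zero (fun k => riccatiCoeff B C (k + 1)), zero_add,
    riccatiCoeff]

theorem hasDerivAt_riccatiY (t : ℝ) : HasDerivAt (riccatiY B C) (riccatiZ B C t) t := by
  obtain ⟨K, r, h⟩ := exists_norm_riccatiCoeff_le B C
  rw [funext (riccatiY_eq B C), riccatiZ_eq]
  exact hasDerivAt_expSeries h t

theorem hasDerivAt_riccatiZ (t : ℝ) :
    HasDerivAt (riccatiZ B C) (-C * riccatiY B C t) t := by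
  obtain ⟨K, r, h⟩ := exists_norm_riccatiCoeff_le B C
  have h' : ∀ k, ‖riccatiCoeff B C (k + 1)‖ ≤ (K * r) * r ^ k := fun k =>
    (h (k + 1)).trans_eq (by ring)
  rw [funext (riccatiZ_eq B C), riccatiY_eq, ← (summable_riccatiCoeff B C t).tsum_mul_left]
  have hd := hasDerivAt_expSeries h' t
  simp only [riccatiCoeff, ← mul_smul_comm] at hd
  exact hd

/-- The Riccati equation, for the operator norm on matrices. -/
theorem hasDerivAt_riccatiW {t : ℝ} (ht : IsUnit (riccatiY B C t)) :
    HasDerivAt (fun s => -(riccatiZ B C s) * (riccatiY B C s)⁻¹)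
      ((-(riccatiZ B C t) * (riccatiY B C t)⁻¹) ^ 2 + C) t := by
  have hYY : riccatiY B C t * (riccatiY B C t)⁻¹ = 1 :=
    Matrix.mul_nonsing_inv _ ((Matrix.isUnit_iff_isUnit_det _).1 ht)
  have hinv : HasDerivAt (fun s => (riccatiY B C s)⁻¹)
      (-((riccatiY B C t)⁻¹ * riccatiZ B C t * (riccatiY B C t)⁻¹)) t := by
    simp only [Matrix.nonsing_inv_eq_ringInverse]
    obtain ⟨y, hy⟩ := ht
    have h := hasFDerivAt_ringInverse (𝕜 := ℝ) y
    rw [hy] at h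
    have h2 := h.comp_hasDerivAt t (hasDerivAt_riccatiY B C t)
    rw [← hy, Ring.inverse_unit]
    simp only [_root_.neg_apply, ContinuousLinearMap.mulLeftRight_apply] at h2
    exact h2
  have h := (hasDerivAt_riccatiZ B C t).fun_neg.fun_mul hinv
  refine h.congr_deriv ?_
  simp only [neg_mul, neg_neg, mul_assoc, hYY, mul_one, sq, mul_neg]
  abel

theorem hasDerivAt_matrix_entry {f : ℝ → Matrix (Fin n) (Fin n) ℝ}
    {f' : Matrix (Fin n) (Fin n) ℝ} {t : ℝ} (h : HasDerivAt f f' t) (i j : Fin n) :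
    HasDerivAt (fun s => f s i j) (f' i j) t :=
  (LinearMap.toContinuousLinearMap
    (Matrix.entryLinearMap ℝ ℝ i j)).hasFDerivAt.comp_hasDerivAt t h

end Riccati

/-- Both series defining `Y` and `Z` converge for every `t`, `Y(0) = I`, `Z(0) = −B`, and on any
interval `J` containing `0` on which `Y(t)` is invertible, `W(t) := −Z(t)·Y(t)⁻¹` is
differentiable and solves the matrix Riccati initial value problem `W' = W² + C`, `W(0) = B`. -/
theorem riccati_matrix_solution
    (n : ℕ) (B C : Matrix (Fin n) (Fin n) ℝ)
    (J : Set ℝ) (hJconn : J.OrdConnected) (hJ0 : (0 : ℝ) ∈ J)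
    (hinv : ∀ t ∈ J, IsUnit (riccatiY B C t)) :
    (∀ t : ℝ,
      Summable (fun m : ℕ => ((-1 : ℝ) ^ m * t ^ (2 * m) / (2 * m).factorial) • C ^ m) ∧
      Summable (fun m : ℕ =>
        ((-1 : ℝ) ^ (m + 1) * t ^ (2 * m + 1) / (2 * m + 1).factorial) • (C ^ m * B)) ∧
      Summable (fun m : ℕ =>
        ((-1 : ℝ) ^ (m + 1) * t ^ (2 * m) / (2 * m).factorial) • (C ^ m * B)) ∧
      Summable (fun m : ℕ =>
        ((-1 : ℝ) ^ (m + 1) * t ^ (2 * m + 1) / (2 * m + 1).factorial) • C ^ (m + 1))) ∧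
    riccatiY B C 0 = 1 ∧
    riccatiZ B C 0 = -B ∧
    -(riccatiZ B C 0) * (riccatiY B C 0)⁻¹ = B ∧
    (∀ t ∈ J, ∀ i j : Fin n,
      HasDerivAt (fun s => (-(riccatiZ B C s) * (riccatiY B C s)⁻¹) i j)
        (((-(riccatiZ B C t) * (riccatiY B C t)⁻¹) ^ 2 + C) i j) t) := by
  refine ⟨summable_riccati_series B C, riccatiY_zero B C, riccatiZ_zero B C, ?_,
    fun t ht i j => hasDerivAt_matrix_entry (hasDerivAt_riccatiW B C (hinv t ht)) i j⟩
  simp [riccatiY_zero, riccatiZ_zero]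
end

section
/- Let V : ℝ → ℝⁿ and W : ℝ → Matrix (Fin n) (Fin n) ℝ be differentiable on [0,T) and satisfy the co-evolution system V'(t) = W(t)·V(t) and W'(t) = V(t)V(t)ᵀ for all t ∈ [0,T), with W(0) symmetric. If V(0) ≠ 0 and V(0) is an eigenvector of W(0) (i.e., W(0)·V(0) = α₀·V(0) for some α₀ ∈ ℝ), then for every t ∈ [0,T) the vector V(t) remains an eigenvector of W(t): there exists α(t) ∈ ℝ with W(t)·V(t) = α(t)·V(t) and V(t) ≠ 0. -/
/-!
Write `v₀ = V 0`, let `P` be the orthogonal projection onto the complement of `v₀`, and let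
`y t` be the coordinate of `V t` along `v₀`, so that `V = P V + y v₀` and `P v₀ = 0`. The two
defects `U = P V` and `Z = P W v₀` satisfy the linear homogeneous system
`U' = P W U + y Z`, `Z' = ⟨V, v₀⟩ U`, whose coefficients are bounded on compact intervals. They
vanish at time `0` because `v₀` is an eigenvector of `W 0`, so by Grönwall they vanish identically.
Hence `V t` is a multiple of `v₀` and `v₀` is an eigenvector of `W t`, which makes `V t` an
eigenvector once it is nonzero. Nonvanishing is backward uniqueness for the linear equation
`V' = W V`: a zero at time `t` would propagate back to time `0`.
-/

open Matrix Set

namespace Coevolution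

variable {n : ℕ}

/-- The projection onto the orthogonal complement of `v`, as a matrix `1 - v vᵀ / ⟨v, v⟩`. -/
noncomputable def perp (v : Fin n → ℝ) : Matrix (Fin n) (Fin n) ℝ :=
  1 - (v ⬝ᵥ v)⁻¹ • vecMulVec v v

lemma perp_mulVec (v w : Fin n → ℝ) :
    perp v *ᵥ w = w - ((v ⬝ᵥ v)⁻¹ * (v ⬝ᵥ w)) • v := by
  rw [perp, sub_mulVec, one_mulVec, smul_mulVec, vecMulVec_mulVec]
  ext i
  simp
  ring

lemma perp_mulVec_self {v : Fin n → ℝ} (hv : v ≠ 0) : perp v *ᵥ v = 0 := by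
  have h : v ⬝ᵥ v ≠ 0 := fun h => hv (dotProduct_self_eq_zero.1 h)
  rw [perp_mulVec, inv_mul_cancel₀ h, one_smul, sub_self]

lemma hasDerivAt_const_mulVec (P : Matrix (Fin n) (Fin n) ℝ) {f : ℝ → Fin n → ℝ}
    {f' : Fin n → ℝ} {t : ℝ} (hf : HasDerivAt f f' t) :
    HasDerivAt (fun s => P *ᵥ f s) (P *ᵥ f') t :=
  (LinearMap.toContinuousLinearMap (Matrix.mulVecLin P)).hasFDerivAt.comp_hasDerivAt t hf

lemma hasDerivAt_mulVec_const {W : ℝ → Matrix (Fin n) (Fin n) ℝ}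
    {W' : Matrix (Fin n) (Fin n) ℝ} {t : ℝ} (v : Fin n → ℝ)
    (hW : ∀ i j, HasDerivAt (fun s => W s i j) (W' i j) t) :
    HasDerivAt (fun s => W s *ᵥ v) (W' *ᵥ v) t :=
  hasDerivAt_pi.2 fun i => by
    simp only [mulVec, dotProduct]
    exact HasDerivAt.fun_sum fun j _ => (hW i j).mul_const (v j)

/-- A continuous matrix curve is bounded on a compact interval, as a family of operators for the
sup norm. -/
lemma exists_mulVec_bound {W : ℝ → Matrix (Fin n) (Fin n) ℝ} {a b : ℝ}
    (hW : ∀ i j, ContinuousOn (fun s => W s i j) (Icc a b)) :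
    ∃ C : ℝ, 0 ≤ C ∧ ∀ s ∈ Icc a b, ∀ v : Fin n → ℝ, ‖W s *ᵥ v‖ ≤ C * ‖v‖ := by
  let _ : SeminormedAddCommGroup (Matrix (Fin n) (Fin n) ℝ) :=
    Matrix.linftyOpSeminormedAddCommGroup
  have hc : ContinuousOn W (Icc a b) :=
    continuousOn_pi.2 fun i => continuousOn_pi.2 fun j => hW i j
  obtain ⟨C, hC⟩ := isCompact_Icc.exists_bound_of_continuousOn hc
  refine ⟨max C 0, le_max_right _ _, fun s hs v => ?_⟩
  exact (Matrix.linfty_opNorm_mulVec (W s) v).trans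
    (mul_le_mul_of_nonneg_right ((hC s hs).trans (le_max_left _ _)) (norm_nonneg _))

/-- Backward uniqueness, obtained from forward Grönwall by reversing time. The bound on `f'` holds
for solutions of linear equations with bounded coefficients. -/
lemma eq_zero_left {f f' : ℝ → Fin n → ℝ} {K b : ℝ} (hb : 0 ≤ b)
    (hf : ∀ t ∈ Icc 0 b, HasDerivAt f (f' t) t) (h0 : f b = 0)
    (bound : ∀ t ∈ Icc 0 b, ‖f' t‖ ≤ K * ‖f t‖) : f 0 = 0 := by
  have hmem : ∀ s ∈ Icc 0 b, b - s ∈ Icc 0 b := fun s hs =>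
    ⟨by linarith [hs.2], by linarith [hs.1]⟩
  have hd : ∀ s ∈ Icc 0 b, HasDerivAt (fun s => f (b - s)) (-f' (b - s)) s := fun s hs =>
    (hf _ (hmem s hs)).comp_const_sub b s
  have := eq_zero_of_abs_deriv_le_mul_abs_self_of_eq_zero_right (a := 0) (b := b)
    (K := K) (f := fun s => f (b - s)) (f' := fun s => -f' (b - s))
    (fun s hs => (hd s hs).continuousAt.continuousWithinAt)
    (fun s hs => (hd s (Ico_subset_Icc_self hs)).hasDerivWithinAt) (by simpa using h0)
    (fun s hs => by
      rw [norm_neg]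
      exact bound _ (hmem s (Ico_subset_Icc_self hs)))
    b ⟨hb, le_rfl⟩
  simpa using this

/-- Both defects vanish: `V b` lies on the line through `v = V 0`, and `W b` keeps that line
invariant. -/
lemma perp_eq_zero {b : ℝ} (hb : 0 ≤ b) {V : ℝ → Fin n → ℝ}
    {W : ℝ → Matrix (Fin n) (Fin n) ℝ} {v : Fin n → ℝ} (hv : v ≠ 0)
    (hV : ∀ t ∈ Icc 0 b, HasDerivAt V (W t *ᵥ V t) t)
    (hW : ∀ t ∈ Icc 0 b, ∀ i j,
      HasDerivAt (fun s => W s i j) (vecMulVec (V t) (V t) i j) t)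
    (hV0 : V 0 = v) {α : ℝ} (heig : W 0 *ᵥ v = α • v) :
    perp v *ᵥ V b = 0 ∧ perp v *ᵥ (W b *ᵥ v) = 0 := by
  set P := perp v with hP
  obtain ⟨C, hC0, hC⟩ := exists_mulVec_bound (W := fun s => P * W s) (a := 0) (b := b)
    (fun i j => by
      simp only [Matrix.mul_apply]
      exact continuousOn_finsetSum _ fun k _ => continuousOn_const.mul
        fun t ht => (hW t ht k j).continuousAt.continuousWithinAt)
  have hVc : ContinuousOn V (Icc 0 b) := fun t ht =>
    (hV t ht).continuousAt.continuousWithinAt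
  have hxc : ContinuousOn (fun t => v ⬝ᵥ V t) (Icc 0 b) :=
    continuousOn_finsetSum _ fun k _ => continuousOn_const.mul (continuousOn_pi.1 hVc k)
  obtain ⟨D, hD⟩ := isCompact_Icc.exists_bound_of_continuousOn hxc
  have hD0 : 0 ≤ D := (norm_nonneg _).trans (hD 0 ⟨le_rfl, hb⟩)
  set c := (v ⬝ᵥ v)⁻¹ with hc
  -- the system for the pair of defects, after splitting `V = P V + y v` in `U' = P W V`
  have hU' : ∀ t, P *ᵥ (W t *ᵥ V t) =
      (P * W t) *ᵥ (P *ᵥ V t) + (c * (v ⬝ᵥ V t)) • (P *ᵥ (W t *ᵥ v)) := by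
    intro t
    have h : V t = P *ᵥ V t + (c * (v ⬝ᵥ V t)) • v := by
      rw [hP, perp_mulVec, sub_add_cancel]
    conv_lhs => rw [h]
    rw [mulVec_add, mulVec_add, mulVec_smul, mulVec_smul, mulVec_mulVec]
  have hZ' : ∀ t, P *ᵥ (vecMulVec (V t) (V t) *ᵥ v) = (v ⬝ᵥ V t) • (P *ᵥ V t) := by
    intro t
    rw [vecMulVec_mulVec, op_smul_eq_smul, mulVec_smul, dotProduct_comm]
  have hd : ∀ t ∈ Icc 0 b, HasDerivAt (fun s => (P *ᵥ V s, P *ᵥ (W s *ᵥ v)))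
      (P *ᵥ (W t *ᵥ V t), P *ᵥ (vecMulVec (V t) (V t) *ᵥ v)) t := fun t ht =>
    (hasDerivAt_const_mulVec P (hV t ht)).prodMk
      (hasDerivAt_const_mulVec P (hasDerivAt_mulVec_const v (hW t ht)))
  have key := eq_zero_of_abs_deriv_le_mul_abs_self_of_eq_zero_right (K := C + |c| * D + D)
    (fun t ht => (hd t ht).continuousAt.continuousWithinAt)
    (fun t ht => (hd t (Ico_subset_Icc_self ht)).hasDerivWithinAt)
    (by
      simp only [hV0, heig, mulVec_smul, hP, perp_mulVec_self hv, smul_zero]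
      rfl)
    (fun t ht => by
      have ht := Ico_subset_Icc_self ht
      have hx := hD t ht
      rw [hU', hZ']
      set U := P *ᵥ V t
      set Z := P *ᵥ (W t *ᵥ v)
      have h1 : ‖U‖ ≤ ‖(U, Z)‖ := norm_fst_le (U, Z)
      have h2 : ‖Z‖ ≤ ‖(U, Z)‖ := norm_snd_le (U, Z)
      have h3 : ‖(P * W t) *ᵥ U‖ ≤ C * ‖(U, Z)‖ :=
        (hC t ht U).trans (mul_le_mul_of_nonneg_left h1 hC0)
      have h4 : ‖(c * (v ⬝ᵥ V t)) • Z‖ ≤ |c| * D * ‖(U, Z)‖ := by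
        rw [norm_smul, norm_mul, Real.norm_eq_abs c]
        gcongr
      have h5 : ‖(v ⬝ᵥ V t) • U‖ ≤ D * ‖(U, Z)‖ := by
        rw [norm_smul]
        gcongr
      have h6 : 0 ≤ C * ‖(U, Z)‖ := by positivity
      have h7 : 0 ≤ |c| * D * ‖(U, Z)‖ := by positivity
      have h8 : 0 ≤ D * ‖(U, Z)‖ := by positivity
      refine norm_prod_le_iff.2 ⟨(norm_add_le _ _).trans ?_, ?_⟩
      · linarith
      · dsimp only
        linarith)
    b ⟨hb, le_rfl⟩
  exact Prod.mk_eq_zero.1 key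

end Coevolution

/-- For the co-evolution system `V' = W·V`, `W' = V·Vᵀ` on `[0,T)` with `W(0)` symmetric: if
`V(0) ≠ 0` is an eigenvector of `W(0)`, then for every `t ∈ [0,T)` the vector `V(t)` is nonzero
and remains an eigenvector of `W(t)`. -/
theorem coevolution_eigenvector_preserved
    (n : ℕ) (T : ℝ) (hT : 0 < T)
    (V : ℝ → Fin n → ℝ) (W : ℝ → Matrix (Fin n) (Fin n) ℝ)
    (hV : ∀ t ∈ Set.Ico (0 : ℝ) T, HasDerivAt V (W t *ᵥ V t) t)
    (hW : ∀ t ∈ Set.Ico (0 : ℝ) T, ∀ i j,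
      HasDerivAt (fun s => W s i j) (vecMulVec (V t) (V t) i j) t)
    (hsym : (W 0)ᵀ = W 0)
    (hV0 : V 0 ≠ 0)
    (heig : ∃ α₀ : ℝ, W 0 *ᵥ V 0 = α₀ • V 0) :
    ∀ t ∈ Set.Ico (0 : ℝ) T, V t ≠ 0 ∧ ∃ α : ℝ, W t *ᵥ V t = α • V t := by
  intro t ht
  have hsub : ∀ s ∈ Icc 0 t, s ∈ Ico 0 T := fun s hs => ⟨hs.1, hs.2.trans_lt ht.2⟩
  obtain ⟨α, hα⟩ := heig
  obtain ⟨hU, hZ⟩ := Coevolution.perp_eq_zero ht.1 hV0 (fun s hs => hV s (hsub s hs))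
    (fun s hs => hW s (hsub s hs)) rfl hα
  rw [Coevolution.perp_mulVec, sub_eq_zero] at hU hZ
  refine ⟨fun h0 => hV0 ?_, ((V 0 ⬝ᵥ V 0)⁻¹ * (V 0 ⬝ᵥ W t *ᵥ V 0)), ?_⟩
  · obtain ⟨C, -, hC⟩ := Coevolution.exists_mulVec_bound (W := W) (a := 0) (b := t)
      (fun i j s hs => (hW s (hsub s hs) i j).continuousAt.continuousWithinAt)
    exact Coevolution.eq_zero_left ht.1 (fun s hs => hV s (hsub s hs)) h0
      (fun s hs => hC s hs (V s))
  · generalize (V 0 ⬝ᵥ V 0)⁻¹ * (V 0 ⬝ᵥ W t *ᵥ V 0) = β at hZ ⊢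
    rw [hU, mulVec_smul, hZ, smul_comm]
end
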